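/- (Proposition 2: zero volumetric charges are socially optimal.) For every (τb, τs) ∈ 𝒯, V(τb, τs) ≤ V(0, 0); that is, the maximum of the optimal value function V over the rate set 𝒯 is attained at (τb, τs) = (0, 0), so max_{(τb,τs)∈𝒯} V(τb, τs) = V(0, 0). -/

import Mathlib

/-- A lower-level decision vector `x = (d, l, zs, zb, g, (g_{ih}), y)`. -/
structure LVec (N : ℕ) (H : Fin N → Type) where
  d : Fin N → ℝ
  l : Fin N → ℝ
  zs : Fin N → ℝ
  zb : Fin N → ℝ
  g : Fin N → ℝ
  gih : (i : Fin N) → H i → ℝ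
  y : Fin N → ℝ

/-- The lower-level feasible set `X`. -/
def FeasX {N K : ℕ} {H : Fin N → Type} [∀ i, Fintype (H i)]
    (R Gp : Fin N → ℝ) (Gcap : (i : Fin N) → H i → ℝ)
    (T : Fin K → ℝ) (PTDF : Fin K → Fin N → ℝ) (x : LVec N H) : Prop :=
  (∀ i, 0 ≤ x.d i) ∧ (∀ i, 0 ≤ x.l i) ∧ (∀ i, 0 ≤ x.zs i) ∧ (∀ i, 0 ≤ x.zb i) ∧
  (∀ i, 0 ≤ x.g i) ∧ (∀ i (h : H i), 0 ≤ x.gih i h) ∧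
  (∀ i, x.l i + x.zs i - x.zb i - x.g i - R i = 0) ∧
  (∀ i, x.g i ≤ Gp i) ∧
  (∀ i (h : H i), x.gih i h ≤ Gcap i h) ∧
  (∑ i, x.y i = 0) ∧
  (∀ k, -T k ≤ ∑ i, PTDF k i * x.y i ∧ ∑ i, PTDF k i * x.y i ≤ T k) ∧
  (∀ i, x.y i - (∑ h, x.gih i h) - (x.zs i - x.zb i) + x.d i = 0)

/-- The social surplus `Π(x; τb, τs)`. -/
noncomputable def surplus {N : ℕ} {H : Fin N → Type} [∀ i, Fintype (H i)]
    (P0 Q0 α : Fin N → ℝ) (Cg : Fin N → ℝ → ℝ) (a A : (i : Fin N) → H i → ℝ)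
    (τb τs : ℝ) (x : LVec N H) : ℝ :=
  (∑ i, ((∫ m in (0:ℝ)..x.d i, (P0 i - (P0 i / ((1 - α i) * Q0 i)) * m)) - τb * x.d i))
  + (∑ i, (τs * x.zs i - τb * x.zb i
      + (∫ m in (0:ℝ)..x.l i, (P0 i - (P0 i / (α i * Q0 i)) * m)) - Cg i (x.g i)))
  - ∑ i, ∑ h, (a i h * x.gih i h + (1 / 2) * A i h * (x.gih i h) ^ 2)

/-- The optimal value function `V(τb, τs)` (as a real-valued supremum). -/
noncomputable def Vval {N K : ℕ} {H : Fin N → Type} [∀ i, Fintype (H i)]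
    (P0 Q0 α : Fin N → ℝ) (Cg : Fin N → ℝ → ℝ) (a A Gcap : (i : Fin N) → H i → ℝ)
    (R Gp : Fin N → ℝ) (T : Fin K → ℝ) (PTDF : Fin K → Fin N → ℝ)
    (τ : ℝ × ℝ) : ℝ :=
  sSup ((fun x => surplus P0 Q0 α Cg a A τ.1 τ.2 x) ''
    {x : LVec N H | FeasX R Gp Gcap T PTDF x})

/-- The rate set `𝒯`. -/
def Tset (τhat τlow : ℝ) : Set (ℝ × ℝ) :=
  {τ | 0 ≤ τ.1 ∧ τ.1 ≤ τhat ∧ τlow ≤ τ.2 ∧ τ.2 ≤ τ.1}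

/-!
Summing the nodal balances cancels the net exports `y`, so on the feasible set the consumption
`∑ d` equals the plants' output plus the sales `∑ zs` minus the purchases `∑ zb`. The volumetric
charges therefore change the surplus by exactly `-τb * ∑ gih - (τb - τs) * ∑ zs`, which is
nonpositive for `0 ≤ τb` and `τs ≤ τb`: every feasible decision is worth most at zero rates.
Passing to suprema requires the zero-rate surplus to be bounded above. This holds because all
consumption is met from capacity-limited supply, so that `d` and `l` range over bounded intervals.
-/

open MeasureTheory in
theorem bddAbove_image_primitive {f : ℝ → ℝ} {μ : Measure ℝ} [NullSingletonClass μ]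
    (hf : ∀ a b, IntervalIntegrable f μ a b) (a : ℝ) {s : Set ℝ} (hs : IsCompact s) :
    BddAbove ((fun t => ∫ m in a..t, f m ∂μ) '' s) :=
  hs.bddAbove_image (intervalIntegral.continuous_primitive hf a).continuousOn

/-- The total supply capacity of the system: all plants and backup units at full capacity
together with the renewable output. -/
def supplyCapacity {ι : Type*} [Fintype ι] {H : ι → Type*} [∀ i, Fintype (H i)]
    (R Gp : ι → ℝ) (Gcap : (i : ι) → H i → ℝ) : ℝ :=
  ∑ i, ∑ h, Gcap i h + ∑ i, Gp i + ∑ i, R i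

section Feasible

variable {N K : ℕ} {H : Fin N → Type} [∀ i, Fintype (H i)]
  {R Gp : Fin N → ℝ} {Gcap : (i : Fin N) → H i → ℝ} {T : Fin K → ℝ} {PTDF : Fin K → Fin N → ℝ}

theorem exists_feasX (hR : ∀ i, 0 ≤ R i) (hGp : ∀ i, 0 ≤ Gp i) (hGcap : ∀ i h, 0 ≤ Gcap i h)
    (hT : ∀ k, 0 ≤ T k) : ∃ x : LVec N H, FeasX R Gp Gcap T PTDF x := by
  -- Every node consumes its own renewable output and nothing is traded.
  refine ⟨⟨0, R, 0, 0, 0, 0, 0⟩, ?_⟩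
  simp [FeasX, hR, hGp, hGcap, hT]

namespace FeasX

variable {x : LVec N H}

theorem zs_nonneg (hx : FeasX R Gp Gcap T PTDF x) (i : Fin N) : 0 ≤ x.zs i := hx.2.2.1 i

theorem g_mem_Icc (hx : FeasX R Gp Gcap T PTDF x) (i : Fin N) : x.g i ∈ Set.Icc 0 (Gp i) := by
  obtain ⟨_, _, _, _, g_nonneg, _, _, g_le, _⟩ := hx
  exact ⟨g_nonneg i, g_le i⟩

theorem gih_mem_Icc (hx : FeasX R Gp Gcap T PTDF x) (i : Fin N) (h : H i) :
    x.gih i h ∈ Set.Icc 0 (Gcap i h) := by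
  obtain ⟨_, _, _, _, _, gih_nonneg, _, _, gih_le, _⟩ := hx
  exact ⟨gih_nonneg i h, gih_le i h⟩

theorem sum_d (hx : FeasX R Gp Gcap T PTDF x) :
    ∑ i, x.d i = ∑ i, ∑ h, x.gih i h + ∑ i, x.zs i - ∑ i, x.zb i := by
  obtain ⟨_, _, _, _, _, _, _, _, _, sum_y, _, balance⟩ := hx
  have sum_balance := Finset.sum_eq_zero fun i (_ : i ∈ Finset.univ) => balance i
  simp only [Finset.sum_add_distrib, Finset.sum_sub_distrib, sum_y] at sum_balance
  linarith

theorem sum_l (hx : FeasX R Gp Gcap T PTDF x) :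
    ∑ i, x.l i = ∑ i, x.zb i - ∑ i, x.zs i + ∑ i, x.g i + ∑ i, R i := by
  obtain ⟨_, _, _, _, _, _, balance, _⟩ := hx
  have sum_balance := Finset.sum_eq_zero fun i (_ : i ∈ Finset.univ) => balance i
  simp only [Finset.sum_add_distrib, Finset.sum_sub_distrib] at sum_balance
  linarith

theorem sum_d_add_sum_l_le (hx : FeasX R Gp Gcap T PTDF x) :
    ∑ i, x.d i + ∑ i, x.l i ≤ supplyCapacity R Gp Gcap := by
  have plants_le : ∑ i, ∑ h, x.gih i h ≤ ∑ i, ∑ h, Gcap i h :=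
    Finset.sum_le_sum fun i _ => Finset.sum_le_sum fun h _ => (hx.gih_mem_Icc i h).2
  have backup_le : ∑ i, x.g i ≤ ∑ i, Gp i :=
    Finset.sum_le_sum fun i _ => (hx.g_mem_Icc i).2
  rw [supplyCapacity, hx.sum_d, hx.sum_l]
  linarith

theorem d_mem_Icc (hx : FeasX R Gp Gcap T PTDF x) (i : Fin N) :
    x.d i ∈ Set.Icc 0 (supplyCapacity R Gp Gcap) := by
  have total_le := hx.sum_d_add_sum_l_le
  obtain ⟨d_nonneg, l_nonneg, _⟩ := hx
  have d_le_sum := Finset.single_le_sum (fun j _ => d_nonneg j) (Finset.mem_univ i)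
  have sum_l_nonneg := Finset.sum_nonneg fun j (_ : j ∈ Finset.univ) => l_nonneg j
  exact ⟨d_nonneg i, by linarith⟩

theorem l_mem_Icc (hx : FeasX R Gp Gcap T PTDF x) (i : Fin N) :
    x.l i ∈ Set.Icc 0 (supplyCapacity R Gp Gcap) := by
  have total_le := hx.sum_d_add_sum_l_le
  obtain ⟨d_nonneg, l_nonneg, _⟩ := hx
  have l_le_sum := Finset.single_le_sum (fun j _ => l_nonneg j) (Finset.mem_univ i)
  have sum_d_nonneg := Finset.sum_nonneg fun j (_ : j ∈ Finset.univ) => d_nonneg j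
  exact ⟨l_nonneg i, by linarith⟩

end FeasX

variable {P0 Q0 α : Fin N → ℝ} {Cg : Fin N → ℝ → ℝ} {a A : (i : Fin N) → H i → ℝ}

theorem FeasX.surplus_eq {x : LVec N H} (hx : FeasX R Gp Gcap T PTDF x) (τb τs : ℝ) :
    surplus P0 Q0 α Cg a A τb τs x =
      surplus P0 Q0 α Cg a A 0 0 x
        - (τb * ∑ i, ∑ h, x.gih i h + (τb - τs) * ∑ i, x.zs i) := by
  simp only [surplus, Finset.sum_sub_distrib, Finset.sum_add_distrib, ← Finset.mul_sum, hx.sum_d]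
  ring

theorem FeasX.surplus_le_surplus_zero {x : LVec N H} (hx : FeasX R Gp Gcap T PTDF x) {τb τs : ℝ}
    (hb : 0 ≤ τb) (hs : τs ≤ τb) :
    surplus P0 Q0 α Cg a A τb τs x ≤ surplus P0 Q0 α Cg a A 0 0 x := by
  have plants_nonneg : 0 ≤ ∑ i, ∑ h, x.gih i h :=
    Finset.sum_nonneg fun i _ => Finset.sum_nonneg fun h _ => (hx.gih_mem_Icc i h).1
  have sales_nonneg : 0 ≤ ∑ i, x.zs i := Finset.sum_nonneg fun i _ => hx.zs_nonneg i
  rw [hx.surplus_eq τb τs, sub_le_self_iff]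
  exact add_nonneg (mul_nonneg hb plants_nonneg) (mul_nonneg (sub_nonneg.2 hs) sales_nonneg)

theorem bddAbove_surplus_zero (hCg : ∀ i, BddBelow (Cg i '' Set.Icc 0 (Gp i))) :
    BddAbove (surplus P0 Q0 α Cg a A 0 0 '' {x | FeasX R Gp Gcap T PTDF x}) := by
  have utility_bdd (p c : ℝ) : BddAbove
      ((fun t => ∫ m in (0 : ℝ)..t, (p - c * m)) '' Set.Icc 0 (supplyCapacity R Gp Gcap)) :=
    bddAbove_image_primitive (fun _ _ => Continuous.intervalIntegrable (by fun_prop) _ _) 0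
      isCompact_Icc
  have plant_cost_bdd (i : Fin N) (h : H i) :
      BddBelow ((fun t => a i h * t + 1 / 2 * A i h * t ^ 2) '' Set.Icc 0 (Gcap i h)) :=
    isCompact_Icc.bddBelow_image (by fun_prop)
  choose U utility_le using utility_bdd
  choose m le_backup_cost using hCg
  choose c le_plant_cost using plant_cost_bdd
  refine ⟨∑ i, U (P0 i) (P0 i / ((1 - α i) * Q0 i))
    + ∑ i, (U (P0 i) (P0 i / (α i * Q0 i)) - m i) - ∑ i, ∑ h, c i h, ?_⟩
  rintro _ ⟨x, hx, rfl⟩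
  simp only [surplus, zero_mul, sub_zero, zero_add]
  gcongr with i _ i _ i _ h _
  · exact utility_le _ _ ⟨_, hx.d_mem_Icc i, rfl⟩
  · exact utility_le _ _ ⟨_, hx.l_mem_Icc i, rfl⟩
  · exact le_backup_cost i ⟨_, hx.g_mem_Icc i, rfl⟩
  · exact le_plant_cost i h ⟨_, hx.gih_mem_Icc i h, rfl⟩

theorem zero_volumetric_charge_socially_optimal_general
    (hfeas : ∃ x : LVec N H, FeasX R Gp Gcap T PTDF x)
    (hCg : ∀ i, BddBelow (Cg i '' Set.Icc 0 (Gp i)))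
    {τ : ℝ × ℝ} (hb : 0 ≤ τ.1) (hs : τ.2 ≤ τ.1) :
    Vval P0 Q0 α Cg a A Gcap R Gp T PTDF τ ≤ Vval P0 Q0 α Cg a A Gcap R Gp T PTDF (0, 0) := by
  refine csSup_le (Set.Nonempty.image _ hfeas) ?_
  rintro _ ⟨x, hx, rfl⟩
  exact le_csSup_of_le (bddAbove_surplus_zero hCg) ⟨x, hx, rfl⟩ (hx.surplus_le_surplus_zero hb hs)

end Feasible

/-- (Proposition 2: zero volumetric charges are socially optimal.) The maximum of the
optimal value function `V` over the rate set `𝒯` is attained at `(0, 0)`. -/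
theorem zero_volumetric_charge_socially_optimal
    (N K : ℕ) (hN : 1 ≤ N)
    (H : Fin N → Type) [∀ i, Fintype (H i)]
    (P0 Q0 α R Gp : Fin N → ℝ) (Cg : Fin N → ℝ → ℝ)
    (a A Gcap : (i : Fin N) → H i → ℝ)
    (T : Fin K → ℝ) (PTDF : Fin K → Fin N → ℝ)
    (hP0 : ∀ i, 0 < P0 i) (hQ0 : ∀ i, 0 < Q0 i)
    (hα0 : ∀ i, 0 < α i) (hα1 : ∀ i, α i < 1)
    (hR : ∀ i, 0 < R i) (hGp : ∀ i, 0 ≤ Gp i)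
    (hCg : ∀ i, ContDiff ℝ 1 (Cg i)) (hCgconv : ∀ i, StrictConvexOn ℝ Set.univ (Cg i))
    (hGcap : ∀ i (h : H i), 0 ≤ Gcap i h)
    (ha : ∀ i (h : H i), 0 < a i h) (hA : ∀ i (h : H i), 0 < A i h)
    (hT : ∀ k, 0 < T k)
    (τhat τlow : ℝ) (hτhat : 0 < τhat) (hτlow : τlow < 0) :
    ((0 : ℝ), (0 : ℝ)) ∈ Tset τhat τlow ∧
    ∀ τ ∈ Tset τhat τlow,
      Vval P0 Q0 α Cg a A Gcap R Gp T PTDF τ ≤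
        Vval P0 Q0 α Cg a A Gcap R Gp T PTDF ((0 : ℝ), (0 : ℝ)) := by
  have feasible : ∃ x : LVec N H, FeasX R Gp Gcap T PTDF x :=
    exists_feasX (fun i => (hR i).le) hGp hGcap fun k => (hT k).le
  exact ⟨⟨le_rfl, hτhat.le, hτlow.le, le_rfl⟩, fun τ ⟨hb, _, _, hs⟩ =>
    zero_volumetric_charge_socially_optimal_general feasible
      (fun i => isCompact_Icc.bddBelow_image (hCg i).continuous.continuousOn) hb hs⟩
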